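/- arXiv:1802.08905 — 4 statements merged into one kernel-verified Lean document; each statement's English description precedes it below -/
import Mathlib

section
/- Let f : ℂ → ℂ be holomorphic and nowhere vanishing on the punctured open unit disk D \ {0}. Then there exists a holomorphic function g on D \ {0} such that g(w)² = f(w²) for all w ∈ D \ {0}. -/
open Metric

/-!
Pull `f` back to the universal cover of the punctured disk, the upper half-plane with covering map
`q = exp (2πiz)`. There `f(q)` has a holomorphic `n`-th root `s`. As `s(z + 1)` and `s(z)` are both
`n`-th roots of `f(q)`, their ratio is a constant `n`-th root of unity, so `s(z + n) = s(z)`: thus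
`s` descends to the variable `w = exp (2πiz/n)`, for which `w ^ n = q`.
-/

open Function.Periodic Topology

section Roots

theorem differentiableAt_of_hasStrictDerivAt_comp {𝕜 E : Type*} [NontriviallyNormedField 𝕜]
    [CompleteSpace 𝕜] [NormedAddCommGroup E] [NormedSpace 𝕜 E] {p : 𝕜 → 𝕜} {s : E → 𝕜} {p' : 𝕜}
    {x : E} (hp : HasStrictDerivAt p p' (s x)) (hp' : p' ≠ 0) (hs : ContinuousAt s x)
    (hps : DifferentiableAt 𝕜 (p ∘ s) x) : DifferentiableAt 𝕜 s x := by
  have inverse_comp : hp.localInverse p p' (s x) hp' ∘ p ∘ s =ᶠ[𝓝 x] s :=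
    hs.eventually (hp.eventually_left_inverse hp')
  have inverse_differentiable : DifferentiableAt 𝕜 (hp.localInverse p p' (s x) hp') (p (s x)) :=
    (hp.to_localInverse hp').hasDerivAt.differentiableAt
  exact (inverse_differentiable.comp x hps).congr_of_eventuallyEq inverse_comp.symm

theorem exists_pow_eq_one_and_eqOn_mul_of_pow_eq {X 𝕜 : Type*} [TopologicalSpace X] [Field 𝕜]
    [TopologicalSpace 𝕜] [T1Space 𝕜] [ContinuousInv₀ 𝕜] [ContinuousMul 𝕜] {S : Set X}
    (hS : IsPreconnected S) {f g : X → 𝕜} (hf : ContinuousOn f S) (hg : ContinuousOn g S)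
    (hg0 : ∀ x ∈ S, g x ≠ 0) {n : ℕ} (hn : n ≠ 0) (hpow : ∀ x ∈ S, f x ^ n = g x ^ n) :
    ∃ ζ : 𝕜, ζ ^ n = 1 ∧ ∀ x ∈ S, f x = ζ * g x := by
  have mem_roots {ζ : 𝕜} : ζ ∈ Polynomial.nthRootsFinset n (1 : 𝕜) ↔ ζ ^ n = 1 :=
    Polynomial.mem_nthRootsFinset (Nat.pos_of_ne_zero hn) 1
  have ratio_mem : Set.MapsTo (f / g) S (Polynomial.nthRootsFinset n (1 : 𝕜)) := fun x hx ↦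
    mem_roots.2 <| by
      rw [Pi.div_apply, div_pow, hpow x hx, div_self (pow_ne_zero n (hg0 x hx))]
  obtain ⟨ζ, hζ, ratio_eq⟩ := hS.eqOn_const_of_mapsTo (Finset.finite_toSet _).isDiscrete
    (hf.div hg hg0) ratio_mem ⟨1, mem_roots.2 (one_pow n)⟩
  exact ⟨ζ, mem_roots.1 hζ, fun x hx ↦ (div_eq_iff (hg0 x hx)).1 (ratio_eq hx)⟩

variable {E : Type*} [NormedAddCommGroup E] [NormedSpace ℂ E] {U : Set E} {f : E → ℂ} {n : ℕ}

theorem exists_differentiableOn_pow_eq (hUc : IsSimplyConnected U) (hUo : IsOpen U)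
    (hf : DifferentiableOn ℂ f U) (hf0 : ∀ x ∈ U, f x ≠ 0) (hn : n ≠ 0) :
    ∃ s : E → ℂ, DifferentiableOn ℂ s U ∧ ∀ x, s x ^ n = f x := by
  obtain ⟨s, s_cont, s_pow⟩ := Complex.exists_continuousOn_pow_eq hUc hUo hf.continuousOn
    (by rintro ⟨x, hx, hfx⟩; exact hf0 x hx hfx) hn
  refine ⟨s, fun x hx ↦ DifferentiableAt.differentiableWithinAt ?_, s_pow⟩
  have hU : U ∈ 𝓝 x := hUo.mem_nhds hx
  have s_ne_zero : s x ≠ 0 := fun h ↦ hf0 x hx (by rw [← s_pow, h, zero_pow hn])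
  refine differentiableAt_of_hasStrictDerivAt_comp (hasStrictDerivAt_pow n (s x)) ?_
    (s_cont.continuousAt hU) ((hf.differentiableAt hU).congr_of_eventuallyEq (.of_forall s_pow))
  exact mul_ne_zero (Nat.cast_ne_zero.2 hn) (pow_ne_zero _ s_ne_zero)

theorem exists_periodic_differentiableOn_pow_eq (hUc : IsSimplyConnected U) (hUo : IsOpen U)
    {c : E} (hUper : ∀ x, x + c ∈ U ↔ x ∈ U) (hf : DifferentiableOn ℂ f U)
    (hf0 : ∀ x ∈ U, f x ≠ 0) (hfper : ∀ x ∈ U, f (x + c) = f x) (hn : n ≠ 0) :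
    ∃ s : E → ℂ, Function.Periodic s (n • c) ∧ DifferentiableOn ℂ s U ∧
      ∀ x ∈ U, s x ^ n = f x := by
  obtain ⟨s, s_diff, s_pow⟩ := exists_differentiableOn_pow_eq hUc hUo hf hf0 hn
  have s_shift_cont : ContinuousOn (fun x ↦ s (x + c)) U :=
    s_diff.continuousOn.comp (by fun_prop) fun x hx ↦ (hUper x).2 hx
  obtain ⟨ζ, hζ, s_shift⟩ := exists_pow_eq_one_and_eqOn_mul_of_pow_eq
    hUc.isPathConnected.isConnected.isPreconnected s_shift_cont s_diff.continuousOn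
    (fun x hx h ↦ hf0 x hx (by rw [← s_pow, h, zero_pow hn])) hn
    (fun x hx ↦ by rw [s_pow, s_pow, hfper x hx])
  -- `s` is arbitrary off `U`; extending by zero makes the relation `s (x + c) = ζ * s x` global.
  have indicator_shift : Function.Semiconj (U.indicator s) (· + c) (ζ * ·) := fun x ↦ by
    by_cases hx : x ∈ U
    · simp [hx, hUper, s_shift]
    · simp [hx, hUper]
  have indicator_eqOn : Set.EqOn (U.indicator s) s U := Set.eqOn_indicator
  refine ⟨U.indicator s, fun x ↦ ?_, s_diff.congr indicator_eqOn, fun x hx ↦ ?_⟩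
  · simpa [hζ] using indicator_shift.iterate_right n x
  · rw [indicator_eqOn hx, s_pow]

end Roots

theorem isSimplyConnected_of_convex {E : Type*} [AddCommGroup E] [Module ℝ E] [TopologicalSpace E]
    [IsTopologicalAddGroup E] [ContinuousSMul ℝ E] {S : Set E} (hS : Convex ℝ S)
    (hne : S.Nonempty) : IsSimplyConnected S := by
  have : ContractibleSpace S := hS.contractibleSpace hne
  exact SimplyConnectedSpace.ofContractible S

section QParam

theorem periodic_qParam {h : ℝ} (hh : h ≠ 0) : Function.Periodic (qParam h) h := fun z ↦ by
  have hh' : (h : ℂ) ≠ 0 := Complex.ofReal_ne_zero.2 hh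
  rw [qParam, qParam, mul_add, add_div, mul_div_cancel_right₀ _ hh', Complex.exp_periodic]

theorem qParam_pow_natCast {n : ℕ} (hn : n ≠ 0) (z : ℂ) : qParam n z ^ n = qParam 1 z := by
  have hn' : (n : ℂ) ≠ 0 := Nat.cast_ne_zero.2 hn
  simp only [qParam, ← Complex.exp_nat_mul, Complex.ofReal_natCast, Complex.ofReal_one, div_one,
    mul_div_cancel₀ _ hn']

theorem qParam_preimage_ball_diff_zero {h r : ℝ} (hh : 0 < h) (hr : 0 < r) :
    qParam h ⁻¹' (ball 0 r \ {0}) = {z | -h * Real.log r / (2 * Real.pi) < z.im} := by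
  have log_eq : -2 * Real.pi * (-h * Real.log r / (2 * Real.pi)) / h = Real.log r := by
    field_simp
  ext z
  simp only [Set.mem_preimage, Set.mem_sdiff, mem_ball_zero_iff, Set.mem_singleton_iff,
    qParam_ne_zero, not_false_eq_true, and_true, Set.mem_ofPred_eq]
  rw [← norm_qParam_lt_iff hh, log_eq, Real.exp_log hr]

theorem isSimplyConnected_qParam_preimage_ball_diff_zero {h r : ℝ} (hh : 0 < h) (hr : 0 < r) :
    IsSimplyConnected (qParam h ⁻¹' (ball 0 r \ {0})) := by
  rw [qParam_preimage_ball_diff_zero hh hr]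
  obtain ⟨y, hy⟩ := exists_gt (-h * Real.log r / (2 * Real.pi))
  exact isSimplyConnected_of_convex (convex_halfSpace_im_gt _) ⟨⟨0, y⟩, hy⟩

end QParam

theorem pow_preimage_ball_diff_zero {𝕜 : Type*} [NormedDivisionRing 𝕜] {n : ℕ} (hn : n ≠ 0)
    {r : ℝ} (hr : 0 ≤ r) : (· ^ n) ⁻¹' (ball (0 : 𝕜) (r ^ n) \ {0}) = ball 0 r \ {0} := by
  ext w
  simp [norm_pow, pow_lt_pow_iff_left₀ (norm_nonneg w) hr hn, hn]

theorem exists_sqrt_on_double_cover_general {U : Set ℂ} (hUo : IsOpen U) (hU0 : 0 ∉ U)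
    (hUc : IsSimplyConnected (qParam 1 ⁻¹' U)) {f : ℂ → ℂ} (hf : DifferentiableOn ℂ f U)
    (hne : ∀ z ∈ U, f z ≠ 0) {n : ℕ} (hn : n ≠ 0) :
    ∃ g : ℂ → ℂ, DifferentiableOn ℂ g ((· ^ n) ⁻¹' U) ∧
      ∀ w ∈ (· ^ n) ⁻¹' U, g w ^ n = f (w ^ n) := by
  have hn' : (n : ℝ) ≠ 0 := Nat.cast_ne_zero.2 hn
  have q_shift (z : ℂ) : qParam 1 (z + 1) = qParam 1 z := mod_cast periodic_qParam one_ne_zero z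
  have isOpen_cover : IsOpen (qParam 1 ⁻¹' U) := hUo.preimage continuous_qParam
  obtain ⟨s, s_per, s_diff, s_pow⟩ := exists_periodic_differentiableOn_pow_eq hUc isOpen_cover
    (c := 1) (fun z ↦ by simp only [Set.mem_preimage, q_shift])
    (hf.comp differentiable_qParam.differentiableOn (Set.mapsTo_preimage _ _))
    (fun z hz ↦ hne _ hz) (fun z _ ↦ congrArg f (q_shift z)) hn
  replace s_per : Function.Periodic s (n : ℝ) := by simpa using s_per
  have exists_qParam_eq (w : ℂ) (hw : w ^ n ∈ U) : ∃ z, qParam n z = w :=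
    ⟨_, qParam_right_inv hn' fun h ↦ hU0 (by simpa [h, hn] using hw)⟩
  refine ⟨cuspFunction n s, fun w hw ↦ ?_, fun w hw ↦ ?_⟩ <;>
    obtain ⟨z, rfl⟩ := exists_qParam_eq w hw <;>
    have hz : z ∈ qParam 1 ⁻¹' U := by simpa [qParam_pow_natCast hn] using hw
  · exact (differentiableAt_cuspFunction hn' s_per
      (s_diff.differentiableAt (isOpen_cover.mem_nhds hz))).differentiableWithinAt
  · rw [eq_cuspFunction hn' s_per, s_pow z hz, Function.comp_apply, qParam_pow_natCast hn]

/-- A nowhere-vanishing holomorphic function on the punctured unit disk admits a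
holomorphic square root after pulling back along the double cover `w ↦ w²`. -/
theorem exists_sqrt_on_double_cover (f : ℂ → ℂ)
    (hf : DifferentiableOn ℂ f (ball (0 : ℂ) 1 \ {0}))
    (hne : ∀ z ∈ ball (0 : ℂ) 1 \ {0}, f z ≠ 0) :
    ∃ g : ℂ → ℂ, DifferentiableOn ℂ g (ball (0 : ℂ) 1 \ {0}) ∧
      ∀ w ∈ ball (0 : ℂ) 1 \ {0}, g w ^ 2 = f (w ^ 2) := by
  rw [← pow_preimage_ball_diff_zero two_ne_zero zero_le_one, one_pow]
  exact exists_sqrt_on_double_cover_general (isOpen_ball.sdiff isClosed_singleton) (by simp)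
    (isSimplyConnected_qParam_preimage_ball_diff_zero one_pos one_pos) hf hne two_ne_zero
end

section
/- Let f : ℂ → ℂ be holomorphic and nowhere vanishing on the punctured open unit disk D \ {0}, and suppose that for some r ∈ (0,1) the winding number (1/(2πi)) ∮_{|z|=r} f′(z)/f(z) dz is an even integer. Then there exists a holomorphic function g on D \ {0} with g(z)² = f(z) for all z ∈ D \ {0}. -/
open Metric

/-!
In the logarithmic coordinate `w ↦ c + exp w`, an annulus becomes a vertical strip, which is convex,
so every holomorphic function on the annulus acquires a primitive there. The increment of that
primitive along the period `2πi` is the integral of the function over a circle; if it vanishes, the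
primitive descends to the annulus. Applied to `f' / f - m / (z - c)`, where `m` is the winding
number of `f`, this gives `f z = (z - c) ^ m * exp (L z)` with `L` holomorphic, and when `m = k * n`
a `k`-th root is `(z - c) ^ n * exp (L z / k)`.
-/

section HolomorphicRoot

open Complex Set

open scoped Real Topology

theorem hasDerivAt_of_comp_right {𝕜 E : Type*} [NontriviallyNormedField 𝕜] [CompleteSpace 𝕜]
    [NormedAddCommGroup E] [NormedSpace 𝕜 E] {f : 𝕜 → E} {g : 𝕜 → 𝕜} {h' : E} {g' a : 𝕜}
    (hg : HasStrictDerivAt g g' a) (hg' : g' ≠ 0) (hfg : HasDerivAt (f ∘ g) h' a) :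
    HasDerivAt f (g'⁻¹ • h') (g a) := by
  have hinv_apply : hg.localInverse g g' a hg' (g a) = a :=
    (hg.hasStrictFDerivAt_equiv hg').localInverse_apply_image
  rw [← hinv_apply] at hfg
  refine (hfg.scomp (g a) (hg.to_localInverse hg').hasDerivAt).congr_of_eventuallyEq ?_
  filter_upwards [hg.eventually_right_inverse hg'] with z hz
  simp only [Function.comp_apply, hz]

theorem apply_log_exp_of_add_two_pi_I {α : Type*} {W : Set ℂ} {F : ℂ → α}
    (hW : ∀ w, w + 2 * π * I ∈ W ↔ w ∈ W) (hF : ∀ w ∈ W, F (w + 2 * π * I) = F w)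
    {w : ℂ} (hw : w ∈ W) : F (log (exp w)) = F w := by
  have hperiodic : Function.Periodic (fun v ↦ v ∈ W ∧ F v = F w) (2 * π * I) := fun v ↦
    propext <| (and_congr_left' (hW v)).trans <| and_congr_right fun hv ↦ by rw [hF v hv]
  obtain ⟨n, hn⟩ := log_exp_exists w
  rw [hn]
  exact ((hperiodic.int_mul n w).mpr ⟨hw, rfl⟩).2

theorem circleMap_exp (c : ℂ) (s t : ℝ) :
    circleMap c (Real.exp s) t = c + exp (s + t * I) := by
  rw [circleMap, exp_add, ofReal_exp]

/-- The region of points whose distance to `c` lies in `J`. For an open interval `J` of positive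
reals it is an open annulus; allowing any order-connected `J` treats punctured discs,
punctured planes and exteriors of discs uniformly. -/
def annulus (c : ℂ) (J : Set ℝ) : Set ℂ := {z | dist z c ∈ J}

/-- The vertical strip (or half-plane) of points `w` with `exp w.re ∈ J`. It is the preimage of
`annulus c J` under `w ↦ c + exp w`, for every centre `c`, and serves as its universal cover. -/
def logStrip (J : Set ℝ) : Set ℂ := {w | Real.exp w.re ∈ J}

section Annulus

variable {c w : ℂ} {J : Set ℝ} {r : ℝ}

theorem add_exp_mem_annulus : c + exp w ∈ annulus c J ↔ w ∈ logStrip J := by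
  simp only [annulus, logStrip, mem_ofPred_eq, dist_self_add_left, norm_exp]

theorem add_two_pi_I_mem_logStrip : w + 2 * π * I ∈ logStrip J ↔ w ∈ logStrip J := by
  simp [logStrip]

theorem isOpen_annulus (hJ : IsOpen J) : IsOpen (annulus c J) :=
  hJ.preimage (continuous_id.dist continuous_const)

theorem isOpen_logStrip (hJ : IsOpen J) : IsOpen (logStrip J) :=
  hJ.preimage (Real.continuous_exp.comp continuous_re)

theorem convex_logStrip (hJ : J.OrdConnected) : Convex ℝ (logStrip J) :=
  (hJ.preimage_mono Real.exp_monotone).convex.linear_preimage reLm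

theorem ne_center_of_mem_annulus (hJ₀ : J ⊆ Ioi 0) {z : ℂ} (hz : z ∈ annulus c J) : z ≠ c :=
  dist_pos.1 (hJ₀ hz)

theorem image_add_exp_logStrip (hJ₀ : J ⊆ Ioi 0) :
    (fun w ↦ c + exp w) '' logStrip J = annulus c J := by
  refine Subset.antisymm (image_subset_iff.2 fun w hw ↦ add_exp_mem_annulus.2 hw) fun z hz ↦ ?_
  have hexp : c + exp (log (z - c)) = z := by
    rw [exp_log (sub_ne_zero.2 (ne_center_of_mem_annulus hJ₀ hz)), add_sub_cancel]
  exact ⟨log (z - c), add_exp_mem_annulus.1 (hexp ▸ hz), hexp⟩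

theorem isPreconnected_annulus (hJ : J.OrdConnected) (hJ₀ : J ⊆ Ioi 0) :
    IsPreconnected (annulus c J) := by
  rw [← image_add_exp_logStrip hJ₀]
  exact (convex_logStrip hJ).isPreconnected.image _
    (continuous_const.add continuous_exp).continuousOn

theorem sphere_subset_annulus (hr : r ∈ J) : sphere c r ⊆ annulus c J := fun z hz ↦ by
  rwa [annulus, mem_ofPred_eq, mem_sphere.1 hz]

theorem circleIntegrable_of_continuousOn_annulus {E : Type*} [NormedAddCommGroup E] {φ : ℂ → E}
    (hφ : ContinuousOn φ (annulus c J)) (hr : r ∈ J) (hr₀ : 0 ≤ r) : CircleIntegrable φ c r :=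
  (hφ.mono (sphere_subset_annulus hr)).circleIntegrable hr₀

theorem ball_diff_center_eq_annulus (c : ℂ) (R : ℝ) : ball c R \ {c} = annulus c (Ioo 0 R) := by
  ext z
  simp [annulus, dist_pos, and_comm]

end Annulus

section Primitive

variable {E : Type*} [NormedAddCommGroup E] [NormedSpace ℂ E] [CompleteSpace E]
  {c : ℂ} {J : Set ℝ} {r : ℝ} {φ : ℂ → E}

theorem circleIntegral_eq_sub_of_hasDerivAt_comp_exp {F : ℂ → E} {s : ℝ}
    (hF : ∀ t : ℝ, HasDerivAt F (exp (s + t * I) • φ (c + exp (s + t * I))) (s + t * I))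
    (hφ : CircleIntegrable φ c (Real.exp s)) :
    ∮ z in C(c, Real.exp s), φ z = F (s + 2 * π * I) - F s := by
  have hline (t : ℝ) : HasDerivAt (fun t : ℝ ↦ (s : ℂ) + t * I) I t := by
    simpa using ((hasDerivAt_id t).ofReal_comp.mul_const I).const_add (s : ℂ)
  have hderiv (t : ℝ) : HasDerivAt (fun t : ℝ ↦ F (s + t * I))
      (deriv (circleMap c (Real.exp s)) t • φ (circleMap c (Real.exp s) t)) t := by
    refine ((hF t).scomp t (hline t)).congr_deriv ?_
    rw [deriv_circleMap, circleMap_exp, circleMap_exp, zero_add, smul_smul, mul_comm]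
  rw [circleIntegral,
    intervalIntegral.integral_eq_sub_of_hasDerivAt (fun t _ ↦ hderiv t) hφ.out]
  simp

theorem isExactOn_logStrip_comp_exp (hJ : IsOpen J) (hJc : J.OrdConnected)
    (hφ : DifferentiableOn ℂ φ (annulus c J)) :
    IsExactOn (fun w ↦ exp w • φ (c + exp w)) (logStrip J) := by
  have hpull : DifferentiableOn ℂ (fun w ↦ exp w • φ (c + exp w)) (logStrip J) :=
    differentiable_exp.differentiableOn.smul <|
      hφ.comp (differentiable_exp.const_add c).differentiableOn fun _ ↦ add_exp_mem_annulus.2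
  obtain ⟨F, hF⟩ := (convex_logStrip hJc).exists_forall_hasDerivWithinAt hpull
  exact ⟨F, fun w hw ↦ (hF w hw).hasDerivAt ((isOpen_logStrip hJ).mem_nhds hw)⟩

theorem sub_eq_circleIntegral_of_hasDerivAt_comp_exp (hJ : IsOpen J) (hJc : J.OrdConnected)
    (hr : r ∈ J) (hr₀ : 0 < r) (hφ : CircleIntegrable φ c r) {F : ℂ → E}
    (hF : ∀ w ∈ logStrip J, HasDerivAt F (exp w • φ (c + exp w)) w) {w : ℂ} (hw : w ∈ logStrip J) :
    F (w + 2 * π * I) - F w = ∮ z in C(c, r), φ z := by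
  obtain ⟨s, rfl⟩ : ∃ s, Real.exp s = r := ⟨_, Real.exp_log hr₀⟩
  have hs (t : ℝ) : (s + t * I : ℂ) ∈ logStrip J := by simpa [logStrip] using hr
  have hderiv : ∀ v ∈ logStrip J, HasDerivAt (fun v ↦ F (v + 2 * π * I) - F v) 0 v := by
    intro v hv
    refine (((hF _ (add_two_pi_I_mem_logStrip.2 hv)).comp_add_const v _).sub
      (hF v hv)).congr_deriv ?_
    rw [exp_periodic v, sub_self]
  calc F (w + 2 * π * I) - F w = F (s + 2 * π * I) - F s :=
        (isOpen_logStrip hJ).is_const_of_deriv_eq_zero (convex_logStrip hJc).isPreconnected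
          (fun v hv ↦ (hderiv v hv).differentiableAt.differentiableWithinAt)
          (fun v hv ↦ (hderiv v hv).deriv) hw (by simpa using hs 0)
    _ = ∮ z in C(c, Real.exp s), φ z :=
        (circleIntegral_eq_sub_of_hasDerivAt_comp_exp (fun t ↦ hF _ (hs t)) hφ).symm

theorem isExactOn_annulus_of_circleIntegral_eq_zero (hJ : IsOpen J) (hJc : J.OrdConnected)
    (hJ₀ : J ⊆ Ioi 0) (hφ : DifferentiableOn ℂ φ (annulus c J)) (hr : r ∈ J)
    (hint : ∮ z in C(c, r), φ z = 0) : IsExactOn φ (annulus c J) := by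
  obtain ⟨F, hF⟩ := isExactOn_logStrip_comp_exp hJ hJc hφ
  have hF_periodic (w : ℂ) (hw : w ∈ logStrip J) : F (w + 2 * π * I) = F w := by
    rw [← sub_eq_zero, ← hint]
    exact sub_eq_circleIntegral_of_hasDerivAt_comp_exp hJ hJc hr (hJ₀ hr)
      (circleIntegrable_of_continuousOn_annulus hφ.continuousOn hr (hJ₀ hr).le) hF hw
  refine ⟨fun z ↦ F (log (z - c)), fun z hz ↦ ?_⟩
  obtain ⟨w, hw, rfl⟩ := (image_add_exp_logStrip hJ₀).superset hz
  have hcomp : (fun z ↦ F (log (z - c))) ∘ (fun w ↦ c + exp w) =ᶠ[𝓝 w] F := by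
    filter_upwards [(isOpen_logStrip hJ).mem_nhds hw] with v hv
    simp only [Function.comp_apply, add_sub_cancel_left]
    exact apply_log_exp_of_add_two_pi_I (fun _ ↦ add_two_pi_I_mem_logStrip) hF_periodic hv
  refine (hasDerivAt_of_comp_right ((hasStrictDerivAt_exp w).const_add c) (exp_ne_zero w)
    ((hF w hw).congr_of_eventuallyEq hcomp)).congr_deriv ?_
  exact inv_smul_smul₀ (exp_ne_zero w) _

end Primitive

theorem differentiableOn_sub_zpow {c : ℂ} {U : Set ℂ} (hU : ∀ z ∈ U, z ≠ c) (n : ℤ) :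
    DifferentiableOn ℂ (fun z ↦ (z - c) ^ n) U :=
  (differentiableOn_id.sub_const c).zpow (.inl fun z hz ↦ sub_ne_zero.2 (hU z hz))

theorem logDeriv_sub_zpow_mul_exp {c z ψ' : ℂ} {ψ : ℂ → ℂ} (hz : z ≠ c)
    (hψ : HasDerivAt ψ ψ' z) (m : ℤ) :
    logDeriv (fun z ↦ (z - c) ^ m * exp (ψ z)) z = m * (z - c)⁻¹ + ψ' := by
  have hzc : z - c ≠ 0 := sub_ne_zero.2 hz
  have hsub : DifferentiableAt ℂ (fun z ↦ z - c) z := by fun_prop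
  have hexp : logDeriv (fun z ↦ exp (ψ z)) z = ψ' := by
    rw [logDeriv_apply, hψ.cexp.deriv, mul_div_cancel_left₀ _ (exp_ne_zero _)]
  have hzpow : logDeriv (fun z ↦ (z - c) ^ m) z = m * (z - c)⁻¹ := by
    rw [logDeriv_fun_zpow hsub, logDeriv_apply, deriv_sub_const, deriv_id'', one_div]
  rw [← hzpow, ← hexp]
  exact logDeriv_mul z (zpow_ne_zero m hzc) (exp_ne_zero (ψ z)) (hsub.zpow (.inl hzc))
    hψ.cexp.differentiableAt

section WindingNumber

variable {c : ℂ} {J : Set ℝ} {r : ℝ} {f : ℂ → ℂ}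

theorem isExactOn_logDeriv_sub_of_winding (hJ : IsOpen J) (hJc : J.OrdConnected)
    (hJ₀ : J ⊆ Ioi 0) (hf : DifferentiableOn ℂ f (annulus c J)) (hne : ∀ z ∈ annulus c J, f z ≠ 0)
    (hr : r ∈ J) {a : ℂ} (ha : ∮ z in C(c, r), logDeriv f z = 2 * π * I * a) :
    IsExactOn (fun z ↦ logDeriv f z - a * (z - c)⁻¹) (annulus c J) := by
  have hlogDeriv : DifferentiableOn ℂ (logDeriv f) (annulus c J) :=
    (hf.deriv (isOpen_annulus hJ)).div hf hne
  have hinv : DifferentiableOn ℂ (fun z ↦ a * (z - c)⁻¹) (annulus c J) :=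
    ((differentiableOn_id.sub_const c).inv fun z hz ↦
      sub_ne_zero.2 (ne_center_of_mem_annulus hJ₀ hz)).const_mul a
  have hintegrable {φ : ℂ → ℂ} (hφ : DifferentiableOn ℂ φ (annulus c J)) :
      CircleIntegrable φ c r :=
    circleIntegrable_of_continuousOn_annulus hφ.continuousOn hr (hJ₀ hr).le
  refine isExactOn_annulus_of_circleIntegral_eq_zero hJ hJc hJ₀ (hlogDeriv.sub hinv) hr ?_
  rw [circleIntegral.integral_sub (hintegrable hlogDeriv) (hintegrable hinv), ha,
    circleIntegral.integral_const_mul, circleIntegral.integral_sub_center_inv c (hJ₀ hr).ne',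
    mul_comm a, sub_self]

theorem exists_eq_zpow_mul_exp_of_winding (hJ : IsOpen J) (hJc : J.OrdConnected)
    (hJ₀ : J ⊆ Ioi 0) (hf : DifferentiableOn ℂ f (annulus c J)) (hne : ∀ z ∈ annulus c J, f z ≠ 0)
    (hr : r ∈ J) {m : ℤ} (hm : ∮ z in C(c, r), logDeriv f z = 2 * π * I * m) :
    ∃ L : ℂ → ℂ, DifferentiableOn ℂ L (annulus c J) ∧
      ∀ z ∈ annulus c J, f z = (z - c) ^ m * exp (L z) := by
  obtain ⟨ψ, hψ⟩ := isExactOn_logDeriv_sub_of_winding hJ hJc hJ₀ hf hne hr hm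
  have hψ_diff : DifferentiableOn ℂ ψ (annulus c J) :=
    fun z hz ↦ (hψ z hz).differentiableAt.differentiableWithinAt
  have hne_center := fun z (hz : z ∈ annulus c J) ↦ ne_center_of_mem_annulus hJ₀ hz
  have hlogDeriv : EqOn (logDeriv f) (logDeriv fun z ↦ (z - c) ^ m * exp (ψ z)) (annulus c J) :=
    fun z hz ↦ by
      rw [logDeriv_sub_zpow_mul_exp (hne_center z hz) (hψ z hz), add_sub_cancel]
  have hdiff : DifferentiableOn ℂ (fun z ↦ (z - c) ^ m * exp (ψ z)) (annulus c J) :=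
    (differentiableOn_sub_zpow hne_center m).mul hψ_diff.cexp
  obtain ⟨a, ha, hfa⟩ := (logDeriv_eqOn_iff hf hdiff (isOpen_annulus hJ)
    (isPreconnected_annulus hJc hJ₀)
    (fun z hz ↦ mul_ne_zero (zpow_ne_zero m (sub_ne_zero.2 (hne_center z hz))) (exp_ne_zero _))
    hne).1 hlogDeriv
  refine ⟨fun z ↦ ψ z + log a, hψ_diff.add_const _, fun z hz ↦ ?_⟩
  rw [hfa hz, Pi.smul_apply, smul_eq_mul, exp_add, exp_log ha]
  ring

end WindingNumber

theorem exists_holomorphic_sqrt_of_even_winding_general {c : ℂ} {J : Set ℝ} (hJ : IsOpen J)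
    (hJc : J.OrdConnected) (hJ₀ : J ⊆ Ioi 0) {f : ℂ → ℂ}
    (hf : DifferentiableOn ℂ f (annulus c J)) (hne : ∀ z ∈ annulus c J, f z ≠ 0)
    {r : ℝ} (hr : r ∈ J) {k : ℕ} (hk : k ≠ 0)
    (hdvd : ∃ n : ℤ, ∮ z in C(c, r), deriv f z / f z = 2 * π * I * (k * n)) :
    ∃ g : ℂ → ℂ, DifferentiableOn ℂ g (annulus c J) ∧ ∀ z ∈ annulus c J, g z ^ k = f z := by
  obtain ⟨n, hn⟩ := hdvd
  obtain ⟨L, hL, hfL⟩ := exists_eq_zpow_mul_exp_of_winding hJ hJc hJ₀ hf hne hr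
    (m := n * k) (hn.trans (by push_cast; ring))
  refine ⟨fun z ↦ (z - c) ^ n * exp (L z / k), ?_, fun z hz ↦ ?_⟩
  · exact (differentiableOn_sub_zpow (fun z hz ↦ ne_center_of_mem_annulus hJ₀ hz) n).mul
      (hL.div_const _).cexp
  · have hk' : (k : ℂ) ≠ 0 := Nat.cast_ne_zero.2 hk
    rw [hfL z hz, mul_pow, ← exp_nat_mul, mul_div_cancel₀ _ hk', zpow_mul, zpow_natCast]

end HolomorphicRoot

/-- Square-root lifting criterion: a nowhere-zero holomorphic function on the punctured
unit disk whose winding number `(1/(2πi)) ∮_{|z|=r} f'/f` is an even integer admits a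
holomorphic square root on the punctured disk. -/
theorem exists_holomorphic_sqrt_of_even_winding (f : ℂ → ℂ)
    (hf : DifferentiableOn ℂ f (ball (0 : ℂ) 1 \ {0}))
    (hne : ∀ z ∈ ball (0 : ℂ) 1 \ {0}, f z ≠ 0)
    (r : ℝ) (hr : r ∈ Set.Ioo (0 : ℝ) 1)
    (heven : ∃ n : ℤ,
      (∮ z in C(0, r), deriv f z / f z) = 2 * Real.pi * Complex.I * (2 * (n : ℂ))) :
    ∃ g : ℂ → ℂ, DifferentiableOn ℂ g (ball (0 : ℂ) 1 \ {0}) ∧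
      ∀ z ∈ ball (0 : ℂ) 1 \ {0}, g z ^ 2 = f z := by
  rw [ball_diff_center_eq_annulus] at *
  exact exists_holomorphic_sqrt_of_even_winding_general isOpen_Ioo Set.ordConnected_Ioo
    (fun _ hx ↦ hx.1) hf hne hr two_ne_zero heven
end

section
/- Let Φ : ℂ → ℂ be holomorphic on the open unit disk D. Then there exists a map ν : ℂ → ℂ, real-differentiable on D, such that for all z ∈ D: ∂_z̄ ν(z) = 1, ∂_z ν(z) = −Φ(z)/4, and ν is harmonic (Δν = 0) on D; here ∂_z = ½(∂_x − i ∂_y) and ∂_z̄ = ½(∂_x + i ∂_y) are the Wirtinger derivatives. Consequently the Hopf function of ν, namely Φ_ν := 4 (∂_z ν)(∂_z ν̄) where ν̄ denotes the pointwise complex conjugate of ν, satisfies Φ_ν = −Φ on D. Explicitly one may take ν(z) = z̄ + Ψ(z), where Ψ is a holomorphic primitive of −Φ/4 on D. -/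
/-!
The component `ν = z̄ + Ψ` is the sum of an antiholomorphic and a holomorphic map, so `∂_z̄ ν`
only sees `z̄` and `∂_z ν` only sees `Ψ`: thus `∂_z̄ ν = 1` and `∂_z ν = Ψ'`. Conjugation exchanges
the two Wirtinger derivatives, so `∂_z ν̄` is the conjugate of `∂_z̄ ν` and the Hopf function of `ν`
is `4 Ψ'`, which is `-Φ` as soon as `Ψ' = -Φ / 4`. Harmonicity follows from `Δ = 4 ∂_z ∂_z̄`, as
`∂_z̄ ν` is constant.
-/

open Metric

/-- The partial derivative `∂_x g` of a map `g : ℂ → ℂ`, viewed via the real Fréchet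
derivative. -/
noncomputable def pdx (g : ℂ → ℂ) (z : ℂ) : ℂ := fderiv ℝ g z 1

/-- The partial derivative `∂_y g` of a map `g : ℂ → ℂ`, viewed via the real Fréchet
derivative. -/
noncomputable def pdy (g : ℂ → ℂ) (z : ℂ) : ℂ := fderiv ℝ g z Complex.I

/-- The Wirtinger derivative `∂_z g = ½(∂_x g − i ∂_y g)`. -/
noncomputable def wirtingerZ (g : ℂ → ℂ) (z : ℂ) : ℂ :=
  (pdx g z - Complex.I * pdy g z) / 2

/-- The Wirtinger derivative `∂_z̄ g = ½(∂_x g + i ∂_y g)`. -/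
noncomputable def wirtingerZBar (g : ℂ → ℂ) (z : ℂ) : ℂ :=
  (pdx g z + Complex.I * pdy g z) / 2

open Complex Filter
open scoped ComplexConjugate Topology

section Wirtinger

variable {f g : ℂ → ℂ} {z : ℂ}

theorem wirtingerZ_congr (h : f =ᶠ[𝓝 z] g) : wirtingerZ f z = wirtingerZ g z := by
  simp only [wirtingerZ, pdx, pdy, h.fderiv_eq]

theorem wirtingerZ_add (hf : DifferentiableAt ℝ f z) (hg : DifferentiableAt ℝ g z) :
    wirtingerZ (fun w => f w + g w) z = wirtingerZ f z + wirtingerZ g z := by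
  simp only [wirtingerZ, pdx, pdy, fderiv_fun_add hf hg, add_apply]
  ring

theorem wirtingerZBar_add (hf : DifferentiableAt ℝ f z) (hg : DifferentiableAt ℝ g z) :
    wirtingerZBar (fun w => f w + g w) z = wirtingerZBar f z + wirtingerZBar g z := by
  simp only [wirtingerZBar, pdx, pdy, fderiv_fun_add hf hg, add_apply]
  ring

theorem pdx_eq_deriv (hf : DifferentiableAt ℂ f z) : pdx f z = deriv f z := by
  simp [pdx, hf.fderiv_restrictScalars ℝ]

theorem pdy_eq_I_mul_deriv (hf : DifferentiableAt ℂ f z) : pdy f z = I * deriv f z := by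
  simp [pdy, hf.fderiv_restrictScalars ℝ]

theorem wirtingerZ_eq_deriv (hf : DifferentiableAt ℂ f z) : wirtingerZ f z = deriv f z := by
  rw [wirtingerZ, pdx_eq_deriv hf, pdy_eq_I_mul_deriv hf]
  linear_combination -(deriv f z / 2) * I_mul_I

theorem wirtingerZBar_eq_zero (hf : DifferentiableAt ℂ f z) : wirtingerZBar f z = 0 := by
  rw [wirtingerZBar, pdx_eq_deriv hf, pdy_eq_I_mul_deriv hf]
  linear_combination (deriv f z / 2) * I_mul_I

theorem fderiv_conj_comp_apply {E : Type*} [NormedAddCommGroup E] [NormedSpace ℝ E]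
    (f : E → ℂ) (x v : E) :
    fderiv ℝ (fun y => conj (f y)) x v = conj (fderiv ℝ f x v) :=
  DFunLike.congr_fun (conjCLE.comp_fderiv (f := f) (x := x)) v

theorem wirtingerZ_conj_comp (f : ℂ → ℂ) (z : ℂ) :
    wirtingerZ (fun w => conj (f w)) z = conj (wirtingerZBar f z) := by
  simp [wirtingerZ, wirtingerZBar, pdx, pdy, fderiv_conj_comp_apply, sub_eq_add_neg, conj_ofNat]

theorem wirtingerZBar_conj_comp (f : ℂ → ℂ) (z : ℂ) :
    wirtingerZBar (fun w => conj (f w)) z = conj (wirtingerZ f z) := by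
  simp [wirtingerZ, wirtingerZBar, pdx, pdy, fderiv_conj_comp_apply, conj_ofNat]

theorem wirtingerZ_conj (z : ℂ) : wirtingerZ conj z = 0 := by
  have hconj : wirtingerZ conj z = conj (wirtingerZBar id z) := wirtingerZ_conj_comp id z
  rw [hconj, wirtingerZBar_eq_zero differentiableAt_id, map_zero]

theorem wirtingerZBar_conj (z : ℂ) : wirtingerZBar conj z = 1 := by
  have hconj : wirtingerZBar conj z = conj (wirtingerZ id z) := wirtingerZBar_conj_comp id z
  rw [hconj, wirtingerZ_eq_deriv differentiableAt_id, deriv_id, map_one]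

end Wirtinger

section SecondDerivative

variable {𝕜 E F : Type*} [NontriviallyNormedField 𝕜] [NormedAddCommGroup E] [NormedSpace 𝕜 E]
  [NormedAddCommGroup F] [NormedSpace 𝕜 F] {f : E → F} {x : E}

theorem differentiableAt_fderiv_of_contDiffAt (hf : ContDiffAt 𝕜 2 f x) :
    DifferentiableAt 𝕜 (fderiv 𝕜 f) x :=
  (hf.fderiv_right (m := 1) le_rfl).differentiableAt one_ne_zero

theorem hasFDerivAt_fderiv_apply (hf : DifferentiableAt 𝕜 (fderiv 𝕜 f) x) (v : E) :
    HasFDerivAt (fun y => fderiv 𝕜 f y v) ((fderiv 𝕜 (fderiv 𝕜 f) x).flip v) x :=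
  (ContinuousLinearMap.apply 𝕜 F v).hasFDerivAt.comp x hf.hasFDerivAt

end SecondDerivative

section Laplacian

variable {f : ℂ → ℂ} {z : ℂ}

theorem pdx_pdy_comm (hf : ContDiffAt ℝ 2 f z) : pdx (pdy f) z = pdy (pdx f) z := by
  have hd : DifferentiableAt ℝ (fderiv ℝ f) z := differentiableAt_fderiv_of_contDiffAt hf
  have hx : HasFDerivAt (pdx f) _ z := hasFDerivAt_fderiv_apply hd 1
  have hy : HasFDerivAt (pdy f) _ z := hasFDerivAt_fderiv_apply hd I
  have hsymm : IsSymmSndFDerivAt ℝ f z := hf.isSymmSndFDerivAt (by simp)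
  rw [pdx, pdy, hx.fderiv, hy.fderiv]
  exact hsymm.eq 1 I

theorem fderiv_wirtingerZBar_apply (hx : DifferentiableAt ℝ (pdx f) z)
    (hy : DifferentiableAt ℝ (pdy f) z) (v : ℂ) :
    fderiv ℝ (wirtingerZBar f) z v =
      (fderiv ℝ (pdx f) z v + I * fderiv ℝ (pdy f) z v) / 2 := by
  have hbar : HasFDerivAt (wirtingerZBar f) _ z :=
    (hx.hasFDerivAt.add (hy.hasFDerivAt.const_mul I)).mul_const (2⁻¹ : ℂ)
  rw [hbar.fderiv]
  simp [div_eq_inv_mul, mul_add]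

theorem pdx_pdx_add_pdy_pdy_eq_four_mul_wirtingerZ_wirtingerZBar (hf : ContDiffAt ℝ 2 f z) :
    pdx (pdx f) z + pdy (pdy f) z = 4 * wirtingerZ (wirtingerZBar f) z := by
  have hd : DifferentiableAt ℝ (fderiv ℝ f) z := differentiableAt_fderiv_of_contDiffAt hf
  have hbar := fderiv_wirtingerZBar_apply (hasFDerivAt_fderiv_apply hd 1).differentiableAt
    (hasFDerivAt_fderiv_apply hd I).differentiableAt
  have hx : pdx (wirtingerZBar f) z = (pdx (pdx f) z + I * pdx (pdy f) z) / 2 := hbar 1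
  have hy : pdy (wirtingerZBar f) z = (pdy (pdx f) z + I * pdy (pdy f) z) / 2 := hbar I
  rw [wirtingerZ, hx, hy, pdx_pdy_comm hf]
  linear_combination pdy (pdy f) z * I_mul_I

end Laplacian

section Suspension

/-- The Hopf function `Φ_g = 4 (∂_z g)(∂_z ḡ)` of a map `g : ℂ → ℂ`, whose vanishing at `z`
expresses weak conformality of `g` there; `ḡ` is the pointwise conjugate of `g`. -/
noncomputable def hopf (g : ℂ → ℂ) (z : ℂ) : ℂ :=
  4 * wirtingerZ g z * wirtingerZ (fun w => conj (g w)) z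

theorem hopf_eq_mul_conj_wirtingerZBar (g : ℂ → ℂ) (z : ℂ) :
    hopf g z = 4 * wirtingerZ g z * conj (wirtingerZBar g z) := by
  rw [hopf, wirtingerZ_conj_comp]

/-- The component `ν(z) = z̄ + Ψ(z)` adjoined to a harmonic map `u` in its conformal suspension
`(u, ν)`. It is defined for every `Ψ : ℂ → ℂ`; in the suspension, `Ψ` is a holomorphic primitive
of `-Φ_u / 4`. -/
noncomputable def suspensionComponent (Ψ : ℂ → ℂ) (z : ℂ) : ℂ := conj z + Ψ z

variable {Ψ : ℂ → ℂ} {z : ℂ}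

theorem differentiableAt_suspensionComponent (hΨ : DifferentiableAt ℝ Ψ z) :
    DifferentiableAt ℝ (suspensionComponent Ψ) z :=
  conjCLE.differentiableAt.add hΨ

theorem contDiffAt_suspensionComponent {n : WithTop ℕ∞} (hΨ : ContDiffAt ℝ n Ψ z) :
    ContDiffAt ℝ n (suspensionComponent Ψ) z :=
  conjCLE.contDiff.contDiffAt.add hΨ

theorem wirtingerZ_suspensionComponent (hΨ : DifferentiableAt ℂ Ψ z) :
    wirtingerZ (suspensionComponent Ψ) z = deriv Ψ z := by
  have hadd : wirtingerZ (suspensionComponent Ψ) z = wirtingerZ conj z + wirtingerZ Ψ z :=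
    wirtingerZ_add conjCLE.differentiableAt (hΨ.restrictScalars ℝ)
  rw [hadd, wirtingerZ_conj, zero_add, wirtingerZ_eq_deriv hΨ]

theorem wirtingerZBar_suspensionComponent (hΨ : DifferentiableAt ℂ Ψ z) :
    wirtingerZBar (suspensionComponent Ψ) z = 1 := by
  have hadd : wirtingerZBar (suspensionComponent Ψ) z = wirtingerZBar conj z + wirtingerZBar Ψ z :=
    wirtingerZBar_add conjCLE.differentiableAt (hΨ.restrictScalars ℝ)
  rw [hadd, wirtingerZBar_conj, wirtingerZBar_eq_zero hΨ, add_zero]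

theorem hopf_suspensionComponent (hΨ : DifferentiableAt ℂ Ψ z) :
    hopf (suspensionComponent Ψ) z = 4 * deriv Ψ z := by
  rw [hopf_eq_mul_conj_wirtingerZBar, wirtingerZ_suspensionComponent hΨ,
    wirtingerZBar_suspensionComponent hΨ, map_one, mul_one]

theorem pdx_pdx_add_pdy_pdy_suspensionComponent (hΨ : AnalyticAt ℂ Ψ z) :
    pdx (pdx (suspensionComponent Ψ)) z + pdy (pdy (suspensionComponent Ψ)) z = 0 := by
  have hbar : wirtingerZBar (suspensionComponent Ψ) =ᶠ[𝓝 z] fun _ => 1 :=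
    hΨ.eventually_analyticAt.mono fun w hw => wirtingerZBar_suspensionComponent hw.differentiableAt
  have hν : ContDiffAt ℝ 2 (suspensionComponent Ψ) z :=
    contDiffAt_suspensionComponent (hΨ.contDiffAt.restrict_scalars ℝ)
  rw [pdx_pdx_add_pdy_pdy_eq_four_mul_wirtingerZ_wirtingerZBar hν, wirtingerZ_congr hbar,
    wirtingerZ_eq_deriv (differentiableAt_const 1), deriv_const, mul_zero]

end Suspension

theorem exists_conformal_suspension_aux_general {U : Set ℂ} (hU : IsOpen U) {Φ : ℂ → ℂ}
    (hΦ : IsExactOn Φ U) :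
    ∃ ν : ℂ → ℂ, DifferentiableOn ℝ ν U ∧
      (∀ z ∈ U, wirtingerZBar ν z = 1) ∧
      (∀ z ∈ U, wirtingerZ ν z = -Φ z / 4) ∧
      (∀ z ∈ U, pdx (pdx ν) z + pdy (pdy ν) z = 0) ∧
      (∀ z ∈ U, hopf ν z = -Φ z) ∧
      ∃ Ψ : ℂ → ℂ, DifferentiableOn ℂ Ψ U ∧
        (∀ z ∈ U, HasDerivAt Ψ (-Φ z / 4) z) ∧
        ∀ z ∈ U, ν z = conj z + Ψ z := by
  obtain ⟨F, hF⟩ := hΦ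
  let Ψ : ℂ → ℂ := fun z => -F z / 4
  have hΨ : ∀ z ∈ U, HasDerivAt Ψ (-Φ z / 4) z := fun z hz => (hF z hz).fun_neg.div_const 4
  have hd : ∀ z ∈ U, DifferentiableAt ℂ Ψ z := fun z hz => (hΨ z hz).differentiableAt
  have hdℝ : ∀ z ∈ U, DifferentiableAt ℝ Ψ z := fun z hz => (hd z hz).restrictScalars ℝ
  have hdOn : DifferentiableOn ℂ Ψ U := fun z hz => (hd z hz).differentiableWithinAt
  refine ⟨suspensionComponent Ψ,
    fun z hz => (differentiableAt_suspensionComponent (hdℝ z hz)).differentiableWithinAt,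
    fun z hz => wirtingerZBar_suspensionComponent (hd z hz), fun z hz => ?_,
    fun z hz => pdx_pdx_add_pdy_pdy_suspensionComponent (hdOn.analyticAt (hU.mem_nhds hz)),
    fun z hz => ?_, Ψ, hdOn, hΨ, fun _ _ => rfl⟩
  · rw [wirtingerZ_suspensionComponent (hd z hz), (hΨ z hz).deriv]
  · rw [hopf_suspensionComponent (hd z hz), (hΨ z hz).deriv]
    ring

/-- Construction of the auxiliary map `ν` in the conformal suspension lemma: given `Φ`
holomorphic on the unit disk, there is a real-differentiable harmonic map `ν` with
`∂_z̄ ν = 1` and `∂_z ν = −Φ/4`, whose Hopf function `Φ_ν = 4 (∂_z ν)(∂_z ν̄)` equals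
`−Φ`; explicitly `ν(z) = z̄ + Ψ(z)` for a holomorphic primitive `Ψ` of `−Φ/4`. -/
theorem exists_conformal_suspension_aux (Φ : ℂ → ℂ)
    (hΦ : DifferentiableOn ℂ Φ (ball (0 : ℂ) 1)) :
    ∃ ν : ℂ → ℂ, DifferentiableOn ℝ ν (ball (0 : ℂ) 1) ∧
      (∀ z ∈ ball (0 : ℂ) 1, wirtingerZBar ν z = 1) ∧
      (∀ z ∈ ball (0 : ℂ) 1, wirtingerZ ν z = -Φ z / 4) ∧
      (∀ z ∈ ball (0 : ℂ) 1, pdx (pdx ν) z + pdy (pdy ν) z = 0) ∧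
      (∀ z ∈ ball (0 : ℂ) 1,
        4 * wirtingerZ ν z * wirtingerZ (fun w => (starRingEnd ℂ) (ν w)) z = -Φ z) ∧
      ∃ Ψ : ℂ → ℂ, DifferentiableOn ℂ Ψ (ball (0 : ℂ) 1) ∧
        (∀ z ∈ ball (0 : ℂ) 1, HasDerivAt Ψ (-Φ z / 4) z) ∧
        ∀ z ∈ ball (0 : ℂ) 1, ν z = (starRingEnd ℂ) z + Ψ z :=
  exists_conformal_suspension_aux_general isOpen_ball hΦ.isExactOn_ball
end

section
/- Let r > 0 and let w : ℝ² → [0, ∞) be continuous on the closed disk {x : |x| ≤ r}. Then there exist σ₀ ∈ (0, r] and a point x₀ with |x₀| ≤ r − σ₀ such that: (i) σ₀² · sup_{|x| ≤ r − σ₀} w = max_{σ ∈ [0, r]} ( σ² · sup_{|x| ≤ r − σ} w ); (ii) w(x₀) ≥ ½ sup_{|x| ≤ r − σ₀} w; and (iii) sup_{|x − x₀| ≤ σ₀/2} w(x) ≤ 8 w(x₀). -/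
open Metric

/-!
The point `x₀` is a maximum over the whole disk of `(r - |x|) ^ 2 * w x`, and `σ₀ = r - |x₀|`. If
`|y| ≤ r - τ` then `τ ≤ r - |y|`, so maximality gives `τ ^ 2 * w y ≤ σ₀ ^ 2 * w x₀`. All three
conclusions are cases of this inequality: arbitrary `τ` gives (i), `τ = σ₀` shows that `x₀` even
maximizes `w` on `|x| ≤ r - σ₀`, and `τ = σ₀ / 2` gives `w ≤ 4 * w x₀` on the disk of radius
`σ₀ / 2` about `x₀`, which lies in `|x| ≤ r - σ₀ / 2`.
-/

open Set Filter Topology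

theorem upperSemicontinuousOn_mul_of_nonneg {X : Type*} [TopologicalSpace X] {s : Set X}
    {f g : X → ℝ} (hf : UpperSemicontinuousOn f s) (hg : UpperSemicontinuousOn g s)
    (hf0 : ∀ x ∈ s, 0 ≤ f x) (hg0 : ∀ x ∈ s, 0 ≤ g x) :
    UpperSemicontinuousOn (fun x => f x * g x) s := by
  intro x hx a ha
  have hlim : Tendsto (fun ε : ℝ => (f x + ε) * (g x + ε)) (𝓝[>] 0) (𝓝 (f x * g x)) := by
    have hcont : Continuous fun ε : ℝ => (f x + ε) * (g x + ε) := by fun_prop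
    simpa using (hcont.tendsto 0).mono_left nhdsWithin_le_nhds
  obtain ⟨ε, hεa, hε⟩ := ((hlim.eventually_lt_const ha).and self_mem_nhdsWithin).exists
  have hfε : ∀ᶠ y in 𝓝[s] x, f y < f x + ε := hf x hx _ (lt_add_of_pos_right _ hε)
  have hgε : ∀ᶠ y in 𝓝[s] x, g y < g x + ε := hg x hx _ (lt_add_of_pos_right _ hε)
  filter_upwards [hfε, hgε, self_mem_nhdsWithin] with y hfy hgy hy
  exact (mul_le_mul hfy.le hgy.le (hg0 y hy) ((hf0 y hy).trans hfy.le)).trans_lt hεa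

section PointSelection

variable {X : Type*} [PseudoMetricSpace X] {c x₀ : X} {r : ℝ} {w : X → ℝ} {p : ℕ}

theorem exists_isMaxOn_sub_dist_pow_mul (hp : p ≠ 0) (hr : 0 < r)
    (hcpt : IsCompact (closedBall c r)) (hw0 : ∀ x ∈ closedBall c r, 0 ≤ w x)
    (hw : UpperSemicontinuousOn w (closedBall c r)) :
    ∃ x₀ ∈ ball c r, IsMaxOn (fun x => (r - dist x c) ^ p * w x) (closedBall c r) x₀ := by
  have hc : c ∈ closedBall c r := mem_closedBall_self hr.le
  have hweight : ContinuousOn (fun x => (r - dist x c) ^ p) (closedBall c r) := by fun_prop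
  have husc : UpperSemicontinuousOn (fun x => (r - dist x c) ^ p * w x) (closedBall c r) :=
    upperSemicontinuousOn_mul_of_nonneg hweight.upperSemicontinuousOn hw
      (fun x hx => pow_nonneg (sub_nonneg.2 hx) p) hw0
  obtain ⟨x₀, hx₀, hmax⟩ := husc.exists_isMaxOn ⟨c, hc⟩ hcpt
  rcases (mem_closedBall.1 hx₀).lt_or_eq with hlt | heq
  · exact ⟨x₀, hlt, hmax⟩
  -- A maximum on the boundary has value `0`, so the center is a maximum as well.
  · refine ⟨c, mem_ball_self hr, isMaxOn_iff.2 fun y hy => (isMaxOn_iff.1 hmax y hy).trans ?_⟩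
    simpa [heq, hp] using mul_nonneg (pow_nonneg hr.le p) (hw0 c hc)

theorem pow_mul_le_of_isMaxOn_sub_dist_pow_mul
    (hmax : IsMaxOn (fun x => (r - dist x c) ^ p * w x) (closedBall c r) x₀)
    {τ : ℝ} (hτ : 0 ≤ τ) {y : X} (hy : y ∈ closedBall c (r - τ)) (hwy : 0 ≤ w y) :
    τ ^ p * w y ≤ (r - dist x₀ c) ^ p * w x₀ :=
  calc τ ^ p * w y ≤ (r - dist y c) ^ p * w y := by
        gcongr
        exact le_sub_comm.1 hy
    _ ≤ (r - dist x₀ c) ^ p * w x₀ := hmax (closedBall_subset_closedBall (sub_le_self r hτ) hy)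

theorem pow_mul_sSup_le_of_isMaxOn_sub_dist_pow_mul (hw0 : ∀ x ∈ closedBall c r, 0 ≤ w x)
    (hmax : IsMaxOn (fun x => (r - dist x c) ^ p * w x) (closedBall c r) x₀)
    {σ : ℝ} (hσ : σ ∈ Icc 0 r) :
    σ ^ p * sSup (w '' closedBall c (r - σ)) ≤ (r - dist x₀ c) ^ p * w x₀ := by
  have : Nonempty (closedBall c (r - σ)) := ⟨c, mem_closedBall_self (sub_nonneg.2 hσ.2)⟩
  rw [sSup_image', Real.mul_iSup_of_nonneg (pow_nonneg hσ.1 p)]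
  exact ciSup_le fun y => pow_mul_le_of_isMaxOn_sub_dist_pow_mul hmax hσ.1 y.2
    (hw0 y (closedBall_subset_closedBall (sub_le_self r hσ.1) y.2))

theorem isMaxOn_closedBall_of_isMaxOn_sub_dist_pow_mul (hw0 : ∀ x ∈ closedBall c r, 0 ≤ w x)
    (hx₀ : x₀ ∈ ball c r)
    (hmax : IsMaxOn (fun x => (r - dist x c) ^ p * w x) (closedBall c r) x₀) :
    IsMaxOn w (closedBall c (dist x₀ c)) x₀ := by
  intro y hy
  have hσ : 0 < r - dist x₀ c := sub_pos.2 hx₀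
  have hwy : 0 ≤ w y := hw0 y (closedBall_subset_closedBall (mem_ball.1 hx₀).le hy)
  exact le_of_mul_le_mul_left
    (pow_mul_le_of_isMaxOn_sub_dist_pow_mul hmax hσ.le (by rwa [sub_sub_cancel]) hwy) (pow_pos hσ p)

theorem le_two_pow_mul_of_isMaxOn_sub_dist_pow_mul (hw0 : ∀ x ∈ closedBall c r, 0 ≤ w x)
    (hx₀ : x₀ ∈ ball c r)
    (hmax : IsMaxOn (fun x => (r - dist x c) ^ p * w x) (closedBall c r) x₀)
    {x : X} (hx : dist x x₀ ≤ (r - dist x₀ c) / 2) :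
    w x ≤ 2 ^ p * w x₀ := by
  set σ := r - dist x₀ c
  have hσ : 0 < σ := sub_pos.2 hx₀
  have hxσ : x ∈ closedBall c (r - σ / 2) := by
    rw [mem_closedBall]
    linarith [dist_triangle x x₀ c]
  have hwx : 0 ≤ w x := hw0 x (closedBall_subset_closedBall (by linarith) hxσ)
  refine le_of_mul_le_mul_left ?_ (pow_pos (half_pos hσ) p)
  calc (σ / 2) ^ p * w x ≤ σ ^ p * w x₀ :=
        pow_mul_le_of_isMaxOn_sub_dist_pow_mul hmax (half_pos hσ).le hxσ hwx
    _ = (σ / 2) ^ p * (2 ^ p * w x₀) := by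
        rw [← mul_assoc, ← mul_pow, div_mul_cancel₀ σ two_ne_zero]

theorem choi_schoen_point_selection_general (hp : p ≠ 0) (hr : 0 < r)
    (hcpt : IsCompact (closedBall c r)) (hw0 : ∀ x ∈ closedBall c r, 0 ≤ w x)
    (hw : UpperSemicontinuousOn w (closedBall c r)) :
    ∃ σ₀ ∈ Ioc 0 r, ∃ x₀ ∈ closedBall c (r - σ₀),
      IsMaxOn (fun σ => σ ^ p * sSup (w '' closedBall c (r - σ))) (Icc 0 r) σ₀ ∧
      sSup (w '' closedBall c (r - σ₀)) = w x₀ ∧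
      ∀ x, dist x x₀ ≤ σ₀ / 2 → w x ≤ 2 ^ p * w x₀ := by
  obtain ⟨x₀, hx₀, hmax⟩ := exists_isMaxOn_sub_dist_pow_mul hp hr hcpt hw0 hw
  have hx₀_mem : x₀ ∈ closedBall c (r - (r - dist x₀ c)) := by simp
  have hsup : sSup (w '' closedBall c (r - (r - dist x₀ c))) = w x₀ := by
    rw [sSup_image']
    refine IsMaxOn.iSup_eq hx₀_mem ?_
    simpa only [sub_sub_cancel] using
      isMaxOn_closedBall_of_isMaxOn_sub_dist_pow_mul hw0 hx₀ hmax
  refine ⟨r - dist x₀ c, ⟨sub_pos.2 hx₀, sub_le_self r dist_nonneg⟩, x₀, hx₀_mem, ?_, hsup,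
    fun x => le_two_pow_mul_of_isMaxOn_sub_dist_pow_mul hw0 hx₀ hmax⟩
  refine isMaxOn_iff.2 fun σ hσ => ?_
  rw [hsup]
  exact pow_mul_sSup_le_of_isMaxOn_sub_dist_pow_mul hw0 hmax hσ

end PointSelection

/-- Choi–Schoen point selection: for a nonnegative function `w` continuous on the closed
disk of radius `r`, there is a scale `σ₀ ∈ (0, r]` maximizing `σ² sup_{|x| ≤ r−σ} w`
over `σ ∈ [0, r]` and a point `x₀` with `|x₀| ≤ r − σ₀`, `w(x₀) ≥ ½ sup_{|x| ≤ r−σ₀} w`,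
and `sup_{|x−x₀| ≤ σ₀/2} w ≤ 8 w(x₀)`. -/
theorem choi_schoen_point_selection (r : ℝ) (hr : 0 < r)
    (w : EuclideanSpace ℝ (Fin 2) → ℝ) (hw0 : ∀ x, 0 ≤ w x)
    (hw : ContinuousOn w (closedBall (0 : EuclideanSpace ℝ (Fin 2)) r)) :
    ∃ σ₀ ∈ Set.Ioc (0 : ℝ) r, ∃ x₀ : EuclideanSpace ℝ (Fin 2),
      ‖x₀‖ ≤ r - σ₀ ∧
      (∀ σ ∈ Set.Icc (0 : ℝ) r,
        σ ^ 2 * sSup (w '' closedBall (0 : EuclideanSpace ℝ (Fin 2)) (r - σ)) ≤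
          σ₀ ^ 2 * sSup (w '' closedBall (0 : EuclideanSpace ℝ (Fin 2)) (r - σ₀))) ∧
      (1 / 2) * sSup (w '' closedBall (0 : EuclideanSpace ℝ (Fin 2)) (r - σ₀)) ≤ w x₀ ∧
      ∀ x : EuclideanSpace ℝ (Fin 2), dist x x₀ ≤ σ₀ / 2 → w x ≤ 8 * w x₀ := by
  obtain ⟨σ₀, hσ₀, x₀, hx₀, hmax, hsup, hbound⟩ := choi_schoen_point_selection_general
    two_ne_zero hr (isCompact_closedBall 0 r) (fun x _ => hw0 x) hw.upperSemicontinuousOn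
  exact ⟨σ₀, hσ₀, x₀, mem_closedBall_zero_iff.1 hx₀, fun σ hσ => hmax hσ,
    by linarith [hw0 x₀], fun x hx => by linarith [hbound x hx, hw0 x₀]⟩
end
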